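/- Let d ≥ 3, γ > −1, 1 ≤ p ≤ d, a > 0 with a ≠ 1, and let k_1,k_2,k_3,k_4 be distinct integers in {1,…,d+1}. Let A_1,…,A_4 ∈ ℝ and set A_5 = (m_{(3,1)} − 2 m_{(2,2)}) / (a(a−1)² p). If Σ_{j=1}^4 A_j S_ℓ(v_{k_j}) + A_5 S_ℓ(u_{a,p}) = m_ℓ holds for the four partitions ℓ = (4), (2,2), (2,1,1), (1,1,1,1), then it also holds for ℓ = (3,1), and consequently w_γ ∫_{𝒯^{d+1}} f(ξ) ξ^γ dξ = Σ_{j=1}^4 A_j · avg_{v_{k_j}𝒜_d} f + A_5 · avg_{u_{a,p}𝒜_d} f for every homogeneous polynomial f of degree 4 in d+1 variables. -/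

import Mathlib

open MeasureTheory Finset

/-- The standard simplex `T^d` in `ℝ^d`. -/
def Td (d : ℕ) : Set (Fin d → ℝ) :=
  {x | (∀ i, 0 ≤ x i) ∧ ∑ i, x i ≤ 1}

/-- The weight function `W_γ(x) = (x_1 ⋯ x_d (1 - |x|₁))^γ` on `T^d`. -/
noncomputable def Wg (d : ℕ) (γ : ℝ) (x : Fin d → ℝ) : ℝ :=
  ((∏ i, x i) * (1 - ∑ i, x i)) ^ γ

/-- The normalization constant `w_γ = Γ((d+1)(γ+1)) / Γ(γ+1)^(d+1)`. -/
noncomputable def wg (d : ℕ) (γ : ℝ) : ℝ :=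
  Real.Gamma ((d + 1) * (γ + 1)) / (Real.Gamma (γ + 1)) ^ (d + 1)

/-- Homogeneous coordinates: `x ↦ (x, 1 - |x|₁) ∈ 𝒯^{d+1}`. -/
noncomputable def lift (d : ℕ) (x : Fin d → ℝ) : Fin (d + 1) → ℝ :=
  Fin.snoc x (1 - ∑ i, x i)

/-- Evaluation of the monomial symmetric polynomial with exponent vector `lv`:
the sum of all distinct monomials whose exponent vector is a permutation of `lv`. -/
noncomputable def msymmEval (d : ℕ) (lv : Fin (d + 1) → ℕ) (x : Fin (d + 1) → ℝ) : ℝ :=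
  ∑ β ∈ Finset.image (fun σ : Equiv.Perm (Fin (d + 1)) => lv ∘ σ) Finset.univ,
    ∏ i, x i ^ β i

/-- Pad a list of exponents (a partition) into an exponent vector in `d+1` variables. -/
def pvec (d : ℕ) (l : List ℕ) : Fin (d + 1) → ℕ :=
  fun i => l.getD (i : ℕ) 0

/-- The moment `m_ℓ := w_γ ∫_{𝒯^{d+1}} S_ℓ(ξ) ξ^γ dξ`. -/
noncomputable def momentS (d : ℕ) (γ : ℝ) (lv : Fin (d + 1) → ℕ) : ℝ :=
  wg d γ * ∫ x in Td d, msymmEval d lv (lift d x) * Wg d γ x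

/-- The average of `f` over the set of distinct coordinate permutations of `y`. -/
noncomputable def orbitAvg (d : ℕ) (y : Fin (d + 1) → ℝ) (f : (Fin (d + 1) → ℝ) → ℝ) : ℝ :=
  ((Finset.image (fun σ : Equiv.Perm (Fin (d + 1)) => y ∘ σ) Finset.univ).card : ℝ)⁻¹ *
    ∑ z ∈ Finset.image (fun σ : Equiv.Perm (Fin (d + 1)) => y ∘ σ) Finset.univ, f z

/-- `v_k = (1,…,1,0,…,0)` with `k` ones, in `d+1` coordinates. -/
def vk (d k : ℕ) : Fin (d + 1) → ℝ :=
  fun i => if (i : ℕ) < k then 1 else 0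

/-- `u_{a,p} = (a,1,…,1,0,…,0)` with one entry `a` followed by `p` ones. -/
def uap (d : ℕ) (a : ℝ) (p : ℕ) : Fin (d + 1) → ℝ :=
  fun i => if (i : ℕ) = 0 then a else if (i : ℕ) ≤ p then 1 else 0

/-!
The node families of the cubature rule interact with the partitions of `4` through the identity
`S_{(3,1)} - 2 S_{(2,2)} = p₃ p₁ - p₂²`, where `pₙ = ∑ x_i ^ n`. At a `0`-`1` vector all power
sums agree, so the right side vanishes; at `u_{a,p}` it equals
`(a³ + p) (a + p) - (a² + p)² = a (a - 1)² p`. Hence the moment equations for `(3,1)` and `(2,2)`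
together amount to the prescribed value of `A₅`.

Both sides of the cubature formula are invariant under permutations of the homogeneous
coordinates. For the integral this holds because a permutation acts on `T^d` by an affine map of
finite order, whose determinant is `±1`. Replacing a homogeneous polynomial by its average over
permutations therefore reduces the formula to the monomial symmetric polynomials.
-/

section PermOrbit

variable {ι M : Type*} [Fintype ι] [DecidableEq ι] [DecidableEq M]

/-- The finite set of distinct coordinate permutations of a vector. `orbitAvg` averages over the
`permOrbit` of a node and `msymmEval` sums over the `permOrbit` of an exponent vector. -/
def permOrbit (y : ι → M) : Finset (ι → M) :=
  univ.image fun σ : Equiv.Perm ι => y ∘ σ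

theorem mem_permOrbit {y z : ι → M} : z ∈ permOrbit y ↔ ∃ σ : Equiv.Perm ι, y ∘ σ = z := by
  simp [permOrbit]

theorem permOrbit_comp_perm (y : ι → M) (τ : Equiv.Perm ι) :
    permOrbit (y ∘ τ) = permOrbit y := by
  ext z
  simp only [mem_permOrbit]
  constructor
  · rintro ⟨σ, rfl⟩
    exact ⟨τ * σ, rfl⟩
  · rintro ⟨σ, rfl⟩
    exact ⟨τ⁻¹ * σ, by ext i; simp⟩

theorem card_filter_comp_perm_eq (y : ι → M) (τ : Equiv.Perm ι) :
    #{σ : Equiv.Perm ι | y ∘ σ = y ∘ τ} = #{σ : Equiv.Perm ι | y ∘ σ = y} := by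
  refine card_equiv (Equiv.mulRight τ⁻¹) fun σ => ?_
  simp only [mem_filter, mem_univ, true_and, Equiv.coe_mulRight, Equiv.Perm.coe_mul,
    ← Function.comp_assoc]
  exact τ.symm.surjective.injective_comp_right.eq_iff.symm.trans
    (by simp [Function.comp_assoc, Equiv.Perm.inv_def])

theorem sum_comp_perm {R : Type*} [Semiring R] (y : ι → M) (h : (ι → M) → R) :
    ∑ σ : Equiv.Perm ι, h (y ∘ σ) =
      #{σ : Equiv.Perm ι | y ∘ σ = y} * ∑ z ∈ permOrbit y, h z := by
  rw [sum_comp h fun σ : Equiv.Perm ι => y ∘ σ, mul_sum]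
  refine sum_congr rfl fun z hz => ?_
  obtain ⟨τ, rfl⟩ := mem_permOrbit.1 hz
  rw [card_filter_comp_perm_eq, nsmul_eq_mul]

theorem permOrbit_average_eq {K : Type*} [Field K] [CharZero K] (y : ι → M)
    (h : (ι → M) → K) :
    (#(permOrbit y) : K)⁻¹ * ∑ z ∈ permOrbit y, h z =
      (Fintype.card (Equiv.Perm ι) : K)⁻¹ * ∑ σ : Equiv.Perm ι, h (y ∘ σ) := by
  have hcard : (Fintype.card (Equiv.Perm ι) : K) =
      #{σ : Equiv.Perm ι | y ∘ σ = y} * #(permOrbit y) := by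
    simpa using sum_comp_perm y fun _ => (1 : K)
  have hstab : (#{σ : Equiv.Perm ι | y ∘ σ = y} : K) ≠ 0 :=
    Nat.cast_ne_zero.2 (card_ne_zero_of_mem (a := 1) (by simp))
  rw [sum_comp_perm, hcard, mul_inv]
  field_simp

end PermOrbit

section MonomialSymmetric

variable {d : ℕ}

theorem msymmEval_comp_perm (α : Fin (d + 1) → ℕ) (τ : Equiv.Perm (Fin (d + 1)))
    (x : Fin (d + 1) → ℝ) : msymmEval d (α ∘ τ) x = msymmEval d α x :=
  sum_congr (permOrbit_comp_perm α τ) fun _ _ => rfl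

theorem momentS_comp_perm (γ : ℝ) (α : Fin (d + 1) → ℕ) (τ : Equiv.Perm (Fin (d + 1))) :
    momentS d γ (α ∘ τ) = momentS d γ α := by
  simp only [momentS, msymmEval_comp_perm]

theorem orbitAvg_eq_perm_average (y : Fin (d + 1) → ℝ) (f : (Fin (d + 1) → ℝ) → ℝ) :
    orbitAvg d y f = (Fintype.card (Equiv.Perm (Fin (d + 1))) : ℝ)⁻¹ *
      ∑ σ : Equiv.Perm (Fin (d + 1)), f (y ∘ σ) :=
  permOrbit_average_eq y f

theorem orbitAvg_monomial (α : Fin (d + 1) → ℕ) (y : Fin (d + 1) → ℝ) :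
    orbitAvg d y (fun z => ∏ i, z i ^ α i) = (#(permOrbit α) : ℝ)⁻¹ * msymmEval d α y := by
  rw [orbitAvg_eq_perm_average, msymmEval, ← permOrbit, permOrbit_average_eq,
    ← Equiv.sum_comp (Equiv.inv (Equiv.Perm (Fin (d + 1))))]
  congr 1
  refine sum_congr rfl fun σ _ => ?_
  rw [← Equiv.prod_comp σ]
  simp

theorem orbitAvg_eval (y : Fin (d + 1) → ℝ) (f : MvPolynomial (Fin (d + 1)) ℝ) :
    orbitAvg d y (fun z => MvPolynomial.eval z f) =
      ∑ m ∈ f.support, f.coeff m * (#(permOrbit m) : ℝ)⁻¹ * msymmEval d m y := by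
  simp only [mul_assoc, ← orbitAvg_monomial]
  simp only [orbitAvg, MvPolynomial.eval_eq', mul_sum]
  rw [sum_comm]
  exact sum_congr rfl fun m _ => sum_congr rfl fun z _ => mul_left_comm _ _ _

theorem permOrbit_pvec_pair (hd : 1 ≤ d) (r s : ℕ) :
    permOrbit (pvec d [r, s]) =
      (univ : Finset (Fin (d + 1))).offDiag.image fun q => Pi.single q.1 r + Pi.single q.2 s := by
  obtain ⟨e, rfl⟩ := Nat.exists_eq_add_of_le' hd
  have hcomp (σ : Equiv.Perm (Fin (e + 1 + 1))) :
      pvec (e + 1) [r, s] ∘ σ = Pi.single (σ⁻¹ 0) r + Pi.single (σ⁻¹ 1) s := by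
    funext m
    obtain ⟨m, rfl⟩ := σ⁻¹.surjective m
    simp only [Function.comp_apply, Equiv.Perm.coe_inv, Equiv.apply_symm_apply,
      Pi.add_apply, Pi.single_apply]
    refine Fin.cases (by simp [pvec]) (Fin.cases (by simp [pvec]) fun m => ?_) m
    simp [pvec, Fin.ext_iff]
  ext β
  simp only [mem_permOrbit, hcomp, mem_image, mem_offDiag, mem_univ, true_and, Prod.exists]
  constructor
  · rintro ⟨σ, rfl⟩
    exact ⟨σ⁻¹ 0, σ⁻¹ 1, by simp, rfl⟩
  · rintro ⟨i, j, hij, rfl⟩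
    obtain ⟨σ, hσ⟩ := Equiv.Perm.exists_extending_pair ![0, 1] ![i, j]
      (by simp [Function.Injective, Fin.forall_fin_two])
      (by simp [Function.Injective, Fin.forall_fin_two, hij, hij.symm])
    have h0 : σ 0 = i := hσ 0
    have h1 : σ 1 = j := hσ 1
    exact ⟨σ⁻¹, by simp [h0, h1]⟩

theorem prod_pow_single_add_single {ι R : Type*} [Fintype ι] [DecidableEq ι] [CommMonoid R]
    (x : ι → R) (i j : ι) (r s : ℕ) :
    ∏ m, x m ^ (Pi.single i r + Pi.single j s : ι → ℕ) m = x i ^ r * x j ^ s := by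
  simp only [Pi.add_apply, pow_add, prod_mul_distrib]
  simp [Pi.single_apply]

theorem sum_offDiag_pow_mul_pow {ι R : Type*} [Fintype ι] [CommRing R]
    (x : ι → R) (r s : ℕ) :
    ∑ q ∈ (univ : Finset ι).offDiag, x q.1 ^ r * x q.2 ^ s =
      (∑ i, x i ^ r) * (∑ i, x i ^ s) - ∑ i, x i ^ (r + s) := by
  classical
  have hsplit := sum_union (disjoint_diag_offDiag (univ : Finset ι))
    (f := fun q => x q.1 ^ r * x q.2 ^ s)
  rw [diag_union_offDiag, sum_diag, sum_product] at hsplit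
  rw [sum_mul_sum, hsplit]
  simp [pow_add]

theorem msymmEval_pair_of_ne (hd : 1 ≤ d) {r s : ℕ} (hr : r ≠ 0) (hs : s ≠ 0) (hrs : r ≠ s)
    (x : Fin (d + 1) → ℝ) :
    msymmEval d (pvec d [r, s]) x =
      (∑ i, x i ^ r) * (∑ i, x i ^ s) - ∑ i, x i ^ (r + s) := by
  rw [msymmEval, ← permOrbit, permOrbit_pvec_pair hd, sum_image]
  · simp only [prod_pow_single_add_single, sum_offDiag_pow_mul_pow]
  · rintro ⟨i, j⟩ - ⟨i', j'⟩ - h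
    simpa [Pi.single_add_single_eq_single_add_single hr hs, hrs, hr] using h

theorem two_mul_msymmEval_pair_self (hd : 1 ≤ d) {r : ℕ} (hr : r ≠ 0) (x : Fin (d + 1) → ℝ) :
    2 * msymmEval d (pvec d [r, r]) x = (∑ i, x i ^ r) ^ 2 - ∑ i, x i ^ (r + r) := by
  rw [msymmEval, ← permOrbit, permOrbit_pvec_pair hd, sq, ← sum_offDiag_pow_mul_pow, mul_sum]
  refine sum_image' _ fun ⟨i, j⟩ hij => ?_
  replace hij : i ≠ j := (mem_offDiag.1 hij).2.2
  have hfiber : {q ∈ (univ : Finset (Fin (d + 1))).offDiag |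
      (Pi.single q.1 r + Pi.single q.2 r : Fin (d + 1) → ℕ) = Pi.single i r + Pi.single j r} =
      {(i, j), (j, i)} := by
    ext ⟨i', j'⟩
    simp only [mem_filter, mem_offDiag, mem_univ, true_and, mem_insert, mem_singleton,
      Prod.mk.injEq, Pi.single_add_single_eq_single_add_single hr hr]
    grind
  rw [hfiber, sum_pair (by simp [hij]), prod_pow_single_add_single]
  ring

theorem msymmEval_three_one_sub (hd : 1 ≤ d) (x : Fin (d + 1) → ℝ) :
    msymmEval d (pvec d [3, 1]) x - 2 * msymmEval d (pvec d [2, 2]) x =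
      (∑ i, x i ^ 3) * (∑ i, x i) - (∑ i, x i ^ 2) ^ 2 := by
  rw [msymmEval_pair_of_ne hd (by simp) (by simp) (by simp),
    two_mul_msymmEval_pair_self hd two_ne_zero]
  simp only [pow_one, Nat.reduceAdd]
  ring

end MonomialSymmetric

section Nodes

variable (d : ℕ)

theorem vk_pow (k : ℕ) {n : ℕ} (hn : n ≠ 0) (i : Fin (d + 1)) : vk d k i ^ n = vk d k i := by
  unfold vk
  split_ifs <;> simp [hn]

theorem sum_uap_pow (a : ℝ) {p : ℕ} (hpd : p ≤ d) {n : ℕ} (hn : n ≠ 0) :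
    ∑ i, uap d a p i ^ n = a ^ n + p := by
  have htail (i : Fin d) : uap d a p i.succ ^ n = if (i : ℕ) < p then 1 else 0 := by
    simp only [uap, Fin.val_succ, Nat.succ_ne_zero, if_false, Nat.add_one_le_iff]
    split_ifs <;> simp [hn]
  have hcard : #{i : Fin d | (i : ℕ) < p} = p := by
    simp [Fin.card_filter_val_lt, hpd]
  simp only [Fin.sum_univ_succ, htail, sum_boole, hcard]
  simp [uap]

variable {d}

theorem msymmEval_three_one_vk (hd : 1 ≤ d) (k : ℕ) :
    msymmEval d (pvec d [3, 1]) (vk d k) = 2 * msymmEval d (pvec d [2, 2]) (vk d k) := by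
  have h := msymmEval_three_one_sub hd (vk d k)
  simp only [vk_pow d k three_ne_zero, vk_pow d k two_ne_zero] at h
  linear_combination h

theorem msymmEval_three_one_uap (hd : 1 ≤ d) (a : ℝ) {p : ℕ} (hpd : p ≤ d) :
    msymmEval d (pvec d [3, 1]) (uap d a p) =
      2 * msymmEval d (pvec d [2, 2]) (uap d a p) + a * (a - 1) ^ 2 * p := by
  have h := msymmEval_three_one_sub hd (uap d a p)
  have h1 := sum_uap_pow d a hpd one_ne_zero
  simp only [pow_one] at h1
  rw [sum_uap_pow d a hpd three_ne_zero, sum_uap_pow d a hpd two_ne_zero, h1] at h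
  linear_combination h

end Nodes

section Partitions

theorem exists_perm_comp_eq_of_map_eq {ι M : Type*} [Fintype ι] {f g : ι → M}
    (h : univ.val.map f = univ.val.map g) : ∃ σ : Equiv.Perm ι, f ∘ σ = g := by
  classical
  have hfiber (c : M) : Nonempty ({i // g i = c} ≃ {i // f i = c}) := by
    refine Fintype.card_eq.1 ?_
    have hcount := congrArg (Multiset.count c) h
    simp only [Multiset.count_map, eq_comm (a := c)] at hcount
    rw [Fintype.card_subtype, Fintype.card_subtype]
    exact hcount.symm
  exact ⟨Equiv.ofFiberEquiv fun c => (hfiber c).some,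
    funext fun i => Equiv.ofFiberEquiv_map _ i⟩

theorem map_pvec {d : ℕ} {l : List ℕ} (hl : l.length ≤ d + 1) :
    univ.val.map (pvec d l) = (l : Multiset ℕ) + Multiset.replicate (d + 1 - l.length) 0 := by
  rw [Fin.univ_val_map, ← Multiset.coe_replicate, Multiset.coe_add, Multiset.coe_eq_coe]
  refine List.Perm.of_eq (List.ext_getElem (by simp; omega) fun i _ _ => ?_)
  simp only [List.getElem_ofFn, pvec, List.getElem_append]
  split_ifs with h <;> simp [h]

theorem filter_ne_zero_add_replicate (s : Multiset ℕ) :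
    s.filter (· ≠ 0) + Multiset.replicate (s.card - (s.filter (· ≠ 0)).card) 0 = s := by
  have hs := Multiset.filter_add_not (· ≠ 0) s
  have hcard := congrArg Multiset.card hs
  simp only [not_not, Multiset.filter_eq', Multiset.card_add, Multiset.card_replicate] at hs hcard
  rwa [← hcard, Nat.add_sub_cancel_left]

theorem exists_perm_comp_eq_pvec_parts {d n : ℕ} {α : Fin (d + 1) → ℕ} (hα : ∑ i, α i = n) :
    ∃ P : n.Partition, P.parts.card ≤ d + 1 ∧
      ∃ σ : Equiv.Perm (Fin (d + 1)), α ∘ σ = pvec d (P.parts.sort (· ≥ ·)) := by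
  let P := Nat.Partition.ofSums n (univ.val.map α) hα
  have hcard : P.parts.card ≤ d + 1 :=
    (Multiset.card_le_card (Multiset.filter_le (· ≠ 0) (univ.val.map α))).trans_eq (by simp)
  refine ⟨P, hcard, exists_perm_comp_eq_of_map_eq ?_⟩
  rw [map_pvec (by rwa [Multiset.length_sort]), Multiset.sort_eq, Multiset.length_sort]
  have hfilter := filter_ne_zero_add_replicate (univ.val.map α)
  rw [Multiset.card_map, card_val, card_univ, Fintype.card_fin] at hfilter
  exact hfilter.symm

theorem parts_sort_mem_of_partition_four (P : Nat.Partition 4) :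
    P.parts.sort (· ≥ ·) ∈ [[4], [3, 1], [2, 2], [2, 1, 1], [1, 1, 1, 1]] := by
  have hsort := Multiset.pairwise_sort P.parts (· ≥ ·)
  have hpos : ∀ i ∈ P.parts.sort (· ≥ ·), 0 < i := fun i hi => P.parts_pos (by simpa using hi)
  have hsum : (P.parts.sort (· ≥ ·)).sum = 4 := by
    rw [← Multiset.sum_coe, Multiset.sort_eq, P.parts_sum]
  generalize P.parts.sort (· ≥ ·) = l at hsort hpos hsum
  rcases l with _ | ⟨i, _ | ⟨j, _ | ⟨k, _ | ⟨m, _ | ⟨n, l⟩⟩⟩⟩⟩ <;>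
    simp only [List.pairwise_cons, List.mem_cons, forall_eq_or_imp, List.sum_cons, List.sum_nil,
      List.cons.injEq, reduceCtorEq, and_true, and_false, false_or]
      at hsort hpos hsum ⊢ <;>
    omega

end Partitions

section FiniteOrderAffine

variable {E : Type*} [NormedAddCommGroup E] [NormedSpace ℝ E] [FiniteDimensional ℝ E]
  [MeasurableSpace E] [BorelSpace E] {f : E →ᵃ[ℝ] E}

theorem measurableEmbedding_of_isOfFinOrder (hf : IsOfFinOrder f) : MeasurableEmbedding f := by
  have : ProperSpace E := FiniteDimensional.proper_real E
  obtain ⟨u, rfl⟩ := hf.isUnit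
  refine u.val.continuous_of_finiteDimensional.measurableEmbedding ?_
  refine Function.LeftInverse.injective (g := u.inv) fun x => ?_
  exact congrArg (fun g : E →ᵃ[ℝ] E => g x) u.inv_val

theorem measurePreserving_of_isOfFinOrder (μ : Measure E) [μ.IsAddHaarMeasure]
    (hf : IsOfFinOrder f) : MeasurePreserving f μ μ := by
  have hdet : |LinearMap.det f.linear| = 1 :=
    ((absHom : ℝ →*₀ ℝ).toMonoidHom.comp (LinearMap.det.comp AffineMap.linearHom)
      |>.isOfFinOrder hf).eq_one (abs_nonneg _)
  have hlinear : MeasurePreserving f.linear μ μ := by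
    refine ⟨f.linear.continuous_of_finiteDimensional.measurable, ?_⟩
    rw [Measure.map_linearMap_addHaar_eq_smul_addHaar μ (by intro h; simp [h] at hdet), abs_inv,
      hdet]
    simp
  rw [f.decomp]
  exact (measurePreserving_add_right μ (f 0)).comp hlinear

end FiniteOrderAffine

section Simplex

variable (d : ℕ)

theorem sum_lift (x : Fin d → ℝ) : ∑ i, lift d x i = 1 := by
  simp [lift, Fin.sum_univ_castSucc]

theorem mem_Td_iff (x : Fin d → ℝ) : x ∈ Td d ↔ ∀ i, 0 ≤ lift d x i := by
  simp [Td, lift, Fin.forall_fin_succ']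

theorem lift_le_one {x : Fin d → ℝ} (hx : x ∈ Td d) (i : Fin (d + 1)) : lift d x i ≤ 1 :=
  (single_le_sum (fun j _ => (mem_Td_iff d x).1 hx j) (mem_univ i)).trans_eq (sum_lift d x)

theorem Wg_eq_prod_lift (γ : ℝ) (x : Fin d → ℝ) : Wg d γ x = (∏ i, lift d x i) ^ γ := by
  simp [Wg, lift, Fin.prod_univ_castSucc]

theorem init_lift (x : Fin d → ℝ) : Fin.init (lift d x) = x := by
  simp [lift]

theorem lift_init (y : Fin (d + 1) → ℝ) (hy : ∑ i, y i = 1) : lift d (Fin.init y) = y := by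
  rw [Fin.sum_univ_castSucc] at hy
  have hlast : 1 - ∑ i : Fin d, y i.castSucc = y (Fin.last d) := by linarith
  simp only [lift, Fin.init, hlast]
  exact Fin.snoc_init_self y

/-- The homogeneous coordinates `lift d`, bundled as an affine map. -/
noncomputable def liftAffine : (Fin d → ℝ) →ᵃ[ℝ] (Fin (d + 1) → ℝ) :=
  AffineMap.mk' (lift d)
    (LinearMap.pi (Fin.snoc (fun i => LinearMap.proj i) (-∑ i, LinearMap.proj i))) 0 fun x => by
      funext i
      refine Fin.lastCases ?_ (fun j => ?_) i
      · simp [lift]; ring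
      · simp [lift]

theorem continuous_lift : Continuous (lift d) :=
  (liftAffine d).continuous_of_finiteDimensional

/-- The affine action on `ℝ^d`, preserving `T^d`, of the permutations of the homogeneous
coordinates. A permutation `σ` acts by precomposition with `σ⁻¹`, so that this is a homomorphism. -/
noncomputable def simplexPerm :
    Equiv.Perm (Fin (d + 1)) →* ((Fin d → ℝ) →ᵃ[ℝ] (Fin d → ℝ)) where
  toFun σ := (LinearMap.funLeft ℝ ℝ (⇑σ⁻¹ ∘ Fin.castSucc)).toAffineMap.comp (liftAffine d)
  map_one' := AffineMap.ext (init_lift d)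
  map_mul' σ τ := by
    refine AffineMap.ext fun x => ?_
    change Fin.init (lift d x ∘ ⇑(σ * τ)⁻¹) =
      Fin.init (lift d (Fin.init (lift d x ∘ ⇑τ⁻¹)) ∘ ⇑σ⁻¹)
    rw [lift_init d (lift d x ∘ ⇑τ⁻¹) ((Equiv.sum_comp τ⁻¹ (lift d x)).trans (sum_lift d x)),
      mul_inv_rev]
    rfl

theorem isOfFinOrder_simplexPerm (σ : Equiv.Perm (Fin (d + 1))) :
    IsOfFinOrder (simplexPerm d σ) :=
  (simplexPerm d).isOfFinOrder (isOfFinOrder_of_finite σ)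

theorem lift_simplexPerm (σ : Equiv.Perm (Fin (d + 1))) (x : Fin d → ℝ) :
    lift d (simplexPerm d σ x) = lift d x ∘ ⇑σ⁻¹ :=
  lift_init d _ ((Equiv.sum_comp σ⁻¹ (lift d x)).trans (sum_lift d x))

theorem Wg_simplexPerm (γ : ℝ) (σ : Equiv.Perm (Fin (d + 1))) (x : Fin d → ℝ) :
    Wg d γ (simplexPerm d σ x) = Wg d γ x := by
  rw [Wg_eq_prod_lift, Wg_eq_prod_lift, lift_simplexPerm]
  exact congrArg (· ^ γ) (Equiv.prod_comp σ⁻¹ (lift d x))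

theorem preimage_simplexPerm_Td (σ : Equiv.Perm (Fin (d + 1))) :
    simplexPerm d σ ⁻¹' Td d = Td d := by
  ext x
  simp only [Set.mem_preimage, mem_Td_iff, lift_simplexPerm]
  exact σ⁻¹.forall_congr_right (q := fun i => 0 ≤ lift d x i)

theorem setIntegral_Td_comp_perm (γ : ℝ) (σ : Equiv.Perm (Fin (d + 1)))
    (g : (Fin (d + 1) → ℝ) → ℝ) :
    ∫ x in Td d, g (lift d x ∘ σ) * Wg d γ x = ∫ x in Td d, g (lift d x) * Wg d γ x := by
  have hσ := isOfFinOrder_simplexPerm d σ⁻¹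
  have h := (measurePreserving_of_isOfFinOrder volume hσ).setIntegral_preimage_emb
    (measurableEmbedding_of_isOfFinOrder hσ) (fun x => g (lift d x) * Wg d γ x) (Td d)
  simpa only [preimage_simplexPerm_Td, lift_simplexPerm, Wg_simplexPerm, inv_inv] using h

theorem Td_subset_Icc : Td d ⊆ Set.Icc 0 1 := fun x hx =>
  ⟨hx.1, fun i => by simpa [lift] using lift_le_one d hx i.castSucc⟩

theorem isCompact_Td : IsCompact (Td d) := by
  refine isCompact_Icc.of_isClosed_subset ?_ (Td_subset_Icc d)
  have hTd : Td d = lift d ⁻¹' Set.Ici 0 := by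
    ext x
    exact mem_Td_iff d x
  rw [hTd]
  exact isClosed_Ici.preimage (continuous_lift d)

end Simplex

section Integrability

variable (d : ℕ) {γ : ℝ}

theorem integrableOn_prod_rpow {ι : Type*} [Fintype ι] (hγ : -1 < γ) :
    IntegrableOn (fun x : ι → ℝ => ∏ i, x i ^ γ) (Set.Icc 0 1) := by
  rw [IntegrableOn, ← Set.pi_univ_Icc, volume_pi, Measure.restrict_pi_pi]
  refine Integrable.fintype_prod (f := fun _ t => t ^ γ) fun _ => ?_
  exact (intervalIntegrable_iff_integrableOn_Icc_of_le zero_le_one).1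
    (intervalIntegral.intervalIntegrable_rpow' hγ)

theorem integrableOn_Wg_of_le_last (hγ : -1 < γ) {c : ℝ} (hc : 0 < c) :
    IntegrableOn (Wg d γ) {x ∈ Td d | c ≤ lift d x (Fin.last d)} := by
  set K := {x ∈ Td d | c ≤ lift d x (Fin.last d)}
  have hKcompact : IsCompact K := (isCompact_Td d).inter_right
    (isClosed_le continuous_const ((continuous_apply _).comp (continuous_lift d)))
  have hlast : ContinuousOn (fun x => lift d x (Fin.last d) ^ γ) K :=
    ((continuous_apply _).comp (continuous_lift d)).continuousOn.rpow_const
      fun x hx => Or.inl (hc.trans_le hx.2).ne'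
  have hprod : IntegrableOn (fun x : Fin d → ℝ => ∏ i, x i ^ γ) K :=
    (integrableOn_prod_rpow hγ).mono_set fun x hx => Td_subset_Icc d hx.1
  refine (hprod.continuousOn_mul hlast hKcompact).congr_fun (fun x hx => ?_)
    hKcompact.measurableSet
  have hnonneg := (mem_Td_iff d x).1 hx.1
  rw [Wg_eq_prod_lift, ← Real.finsetProd_rpow _ _ fun i _ => hnonneg i, Fin.prod_univ_castSucc,
    mul_comm]
  simp [lift]

theorem exists_inv_le_lift (x : Fin d → ℝ) : ∃ i, ((d : ℝ) + 1)⁻¹ ≤ lift d x i := by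
  obtain ⟨i, -, hi⟩ := exists_le_of_sum_le (s := univ) (f := fun _ => ((d : ℝ) + 1)⁻¹)
    (g := lift d x) univ_nonempty (by
      rw [sum_lift, sum_const, card_univ, Fintype.card_fin, nsmul_eq_mul, Nat.cast_succ,
        mul_inv_cancel₀ (by positivity)])
  exact ⟨i, hi⟩

/- Near a face several coordinates may vanish, but some coordinate is always at least
`1 / (d + 1)`. A permutation moves it to the last place, where the corresponding factor of the
weight is harmless and the other factors form a product of one-variable integrable functions. -/
theorem integrableOn_Wg (hγ : -1 < γ) : IntegrableOn (Wg d γ) (Td d) := by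
  let K := {x ∈ Td d | ((d : ℝ) + 1)⁻¹ ≤ lift d x (Fin.last d)}
  let τ (i : Fin (d + 1)) := simplexPerm d (Equiv.swap i (Fin.last d))
  have hcover : Td d ⊆ ⋃ i, τ i ⁻¹' K := by
    intro x hx
    obtain ⟨i, hi⟩ := exists_inv_le_lift d x
    refine Set.mem_iUnion.2 ⟨i, ?_, ?_⟩
    · rwa [← preimage_simplexPerm_Td d (Equiv.swap i (Fin.last d))] at hx
    · simpa [τ, lift_simplexPerm] using hi
  refine IntegrableOn.mono_set (integrableOn_finite_iUnion.2 fun i => ?_) hcover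
  have hc : 0 < ((d : ℝ) + 1)⁻¹ := by positivity
  have hτ : IsOfFinOrder (τ i) := isOfFinOrder_simplexPerm d _
  have hcomp := ((measurePreserving_of_isOfFinOrder volume hτ).integrableOn_comp_preimage
    (measurableEmbedding_of_isOfFinOrder hτ)).2 (integrableOn_Wg_of_le_last d hγ hc)
  exact hcomp.congr_fun_ae (Filter.Eventually.of_forall fun x => Wg_simplexPerm d γ _ x)

theorem integrableOn_comp_lift_mul_Wg (hγ : -1 < γ) {g : (Fin (d + 1) → ℝ) → ℝ}
    (hg : Continuous g) : IntegrableOn (fun x => g (lift d x) * Wg d γ x) (Td d) :=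
  (integrableOn_Wg d hγ).continuousOn_mul (hg.comp (continuous_lift d)).continuousOn
    (isCompact_Td d)

end Integrability

section Cubature

variable {d : ℕ} {γ : ℝ}

theorem setIntegral_orbitAvg (hγ : -1 < γ) {g : (Fin (d + 1) → ℝ) → ℝ} (hg : Continuous g) :
    ∫ x in Td d, orbitAvg d (lift d x) g * Wg d γ x = ∫ x in Td d, g (lift d x) * Wg d γ x := by
  have hcomp (σ : Equiv.Perm (Fin (d + 1))) : Continuous fun y : Fin (d + 1) → ℝ => g (y ∘ σ) :=
    hg.comp (by fun_prop)
  simp only [orbitAvg_eq_perm_average, mul_assoc, sum_mul]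
  rw [integral_const_mul, integral_finsetSum _ fun σ _ =>
    integrableOn_comp_lift_mul_Wg d hγ (hcomp σ)]
  simp only [setIntegral_Td_comp_perm, sum_const, card_univ, nsmul_eq_mul]
  exact inv_mul_cancel_left₀ (Nat.cast_ne_zero.2 Fintype.card_ne_zero) _

theorem continuous_msymmEval (α : Fin (d + 1) → ℕ) : Continuous (msymmEval d α) := by
  unfold msymmEval
  fun_prop

theorem wg_mul_setIntegral_eval (hγ : -1 < γ) (f : MvPolynomial (Fin (d + 1)) ℝ) :
    wg d γ * ∫ x in Td d, MvPolynomial.eval (lift d x) f * Wg d γ x =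
      ∑ m ∈ f.support, f.coeff m * (#(permOrbit m) : ℝ)⁻¹ * momentS d γ m := by
  rw [← setIntegral_orbitAvg hγ (MvPolynomial.continuous_eval f)]
  simp only [orbitAvg_eval, sum_mul, mul_assoc]
  rw [integral_finsetSum _ fun (m : Fin (d + 1) →₀ ℕ) _ => ((integrableOn_comp_lift_mul_Wg d hγ
    (continuous_msymmEval m)).const_mul (#(permOrbit m) : ℝ)⁻¹).const_mul (f.coeff m), mul_sum]
  refine sum_congr rfl fun m _ => ?_
  rw [integral_const_mul, integral_const_mul, momentS]
  ring

variable {ι : Type*} [Fintype ι] {B : ι → ℝ} {y : ι → Fin (d + 1) → ℝ}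

theorem cubature_of_moments (hγ : -1 < γ) {f : MvPolynomial (Fin (d + 1)) ℝ}
    (hmom : ∀ m ∈ f.support, ∑ j, B j * msymmEval d m (y j) = momentS d γ m) :
    wg d γ * ∫ x in Td d, MvPolynomial.eval (lift d x) f * Wg d γ x =
      ∑ j, B j * orbitAvg d (y j) (fun z => MvPolynomial.eval z f) := by
  simp only [orbitAvg_eval, wg_mul_setIntegral_eval hγ, mul_sum]
  rw [sum_comm]
  refine sum_congr rfl fun m hm => ?_
  rw [← hmom m hm, mul_sum]
  exact sum_congr rfl fun j _ => mul_left_comm _ _ _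

theorem cubature_of_partition_moments (hγ : -1 < γ) {n : ℕ}
    (hmom : ∀ P : n.Partition, P.parts.card ≤ d + 1 →
      ∑ j, B j * msymmEval d (pvec d (P.parts.sort (· ≥ ·))) (y j) =
        momentS d γ (pvec d (P.parts.sort (· ≥ ·))))
    {f : MvPolynomial (Fin (d + 1)) ℝ} (hf : f.IsHomogeneous n) :
    wg d γ * ∫ x in Td d, MvPolynomial.eval (lift d x) f * Wg d γ x =
      ∑ j, B j * orbitAvg d (y j) (fun z => MvPolynomial.eval z f) := by
  refine cubature_of_moments hγ fun m hm => ?_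
  have hdegree : ∑ i, m i = n := by
    rw [← Finsupp.degree_eq_sum, Finsupp.degree_eq_weight_one]
    exact hf (MvPolynomial.mem_support_iff.1 hm)
  obtain ⟨P, hP, σ, hσ⟩ := exists_perm_comp_eq_pvec_parts hdegree
  simpa only [← hσ, msymmEval_comp_perm, momentS_comp_perm] using hmom P hP

end Cubature

section IndexFour

variable {d p : ℕ} {γ a A5 : ℝ} {ι : Type*} [Fintype ι] {k : ι → ℕ} {A : ι → ℝ}

theorem moment_three_one_of_two_two (hp1 : 1 ≤ p) (hpd : p ≤ d) (ha : a ≠ 0) (ha1 : a ≠ 1)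
    (hA5 : A5 = (momentS d γ (pvec d [3, 1]) - 2 * momentS d γ (pvec d [2, 2])) /
        (a * (a - 1) ^ 2 * p))
    (h22 : ∑ j, A j * msymmEval d (pvec d [2, 2]) (vk d (k j))
        + A5 * msymmEval d (pvec d [2, 2]) (uap d a p) = momentS d γ (pvec d [2, 2])) :
    ∑ j, A j * msymmEval d (pvec d [3, 1]) (vk d (k j))
        + A5 * msymmEval d (pvec d [3, 1]) (uap d a p) = momentS d γ (pvec d [3, 1]) := by
  have hd := hp1.trans hpd
  have hden : a * (a - 1) ^ 2 * p ≠ 0 := by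
    have := sub_ne_zero.2 ha1
    positivity
  rw [eq_div_iff hden] at hA5
  simp only [msymmEval_three_one_vk hd, msymmEval_three_one_uap hd a hpd,
    mul_left_comm _ (2 : ℝ), ← mul_sum]
  linear_combination 2 * h22 + hA5

theorem cubature_index_four_construction_general (hγ : -1 < γ) (hp1 : 1 ≤ p) (hpd : p ≤ d)
    (ha : a ≠ 0) (ha1 : a ≠ 1)
    (hA5 : A5 = (momentS d γ (pvec d [3, 1]) - 2 * momentS d γ (pvec d [2, 2])) /
        (a * (a - 1) ^ 2 * p))
    (hmom : ∀ l ∈ [[4], [2, 2], [2, 1, 1], [1, 1, 1, 1]], l.length ≤ d + 1 →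
      ∑ j, A j * msymmEval d (pvec d l) (vk d (k j))
          + A5 * msymmEval d (pvec d l) (uap d a p)
        = momentS d γ (pvec d l)) :
    (∑ j, A j * msymmEval d (pvec d [3, 1]) (vk d (k j))
        + A5 * msymmEval d (pvec d [3, 1]) (uap d a p)
      = momentS d γ (pvec d [3, 1]))
    ∧
    (∀ f : MvPolynomial (Fin (d + 1)) ℝ, f.IsHomogeneous 4 →
      wg d γ * ∫ x in Td d, MvPolynomial.eval (lift d x) f * Wg d γ x
        = (∑ j, A j * orbitAvg d (vk d (k j)) (fun z => MvPolynomial.eval z f))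
          + A5 * orbitAvg d (uap d a p) (fun z => MvPolynomial.eval z f)) := by
  have h31 := moment_three_one_of_two_two hp1 hpd ha ha1 hA5
    (hmom [2, 2] (by simp) (by simpa using hp1.trans hpd))
  refine ⟨h31, fun f hf => ?_⟩
  have hcubature := cubature_of_partition_moments hγ
    (B := fun o : Option ι => o.elim A5 A)
    (y := fun o => o.elim (uap d a p) fun j => vk d (k j)) (fun P hP => ?_) hf
  · simpa only [Fintype.sum_option, Option.elim, add_comm] using hcubature
  · rw [← Multiset.length_sort (· ≥ ·)] at hP
    have hmem := parts_sort_mem_of_partition_four P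
    generalize P.parts.sort (· ≥ ·) = l at hP hmem ⊢
    rw [Fintype.sum_option, add_comm]
    by_cases hl : l = [3, 1]
    · exact hl ▸ h31
    · exact hmom l (by grind) hP

end IndexFour

/-- Construction of cubature rules of index `4` on `𝒯^{d+1}`: if the moment equations hold
for the partitions `(4), (2,2), (2,1,1), (1,1,1,1)` and `A_5` is as stated, then the moment
equation for `(3,1)` also holds, and the cubature rule is exact for all homogeneous
polynomials of degree `4`. -/
theorem cubature_index_four_construction
    (d : ℕ) (hd : 3 ≤ d) (γ : ℝ) (hγ : -1 < γ)
    (p : ℕ) (hp1 : 1 ≤ p) (hpd : p ≤ d)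
    (a : ℝ) (ha : 0 < a) (ha1 : a ≠ 1)
    (k : Fin 4 → ℕ) (hkinj : Function.Injective k)
    (hk1 : ∀ j, 1 ≤ k j) (hkd : ∀ j, k j ≤ d + 1)
    (A : Fin 4 → ℝ) (A5 : ℝ)
    (hA5 : A5 = (momentS d γ (pvec d [3, 1]) - 2 * momentS d γ (pvec d [2, 2])) /
        (a * (a - 1) ^ 2 * p))
    (hmom : ∀ l ∈ [[4], [2, 2], [2, 1, 1], [1, 1, 1, 1]],
      ∑ j, A j * msymmEval d (pvec d l) (vk d (k j))
          + A5 * msymmEval d (pvec d l) (uap d a p)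
        = momentS d γ (pvec d l)) :
    (∑ j, A j * msymmEval d (pvec d [3, 1]) (vk d (k j))
        + A5 * msymmEval d (pvec d [3, 1]) (uap d a p)
      = momentS d γ (pvec d [3, 1]))
    ∧
    (∀ f : MvPolynomial (Fin (d + 1)) ℝ, f.IsHomogeneous 4 →
      wg d γ * ∫ x in Td d, MvPolynomial.eval (lift d x) f * Wg d γ x
        = (∑ j, A j * orbitAvg d (vk d (k j)) (fun z => MvPolynomial.eval z f))
          + A5 * orbitAvg d (uap d a p) (fun z => MvPolynomial.eval z f)) :=
  cubature_index_four_construction_general hγ hp1 hpd ha.ne' ha1 hA5 fun l hl _ => hmom l hl
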